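/- arXiv:2106.12337 — 2 statements merged into one kernel-verified Lean document; each statement's English description precedes it below -/
import Mathlib

section
/- Let d ≥ 1 and let Δ = {x ∈ ℝ^d : x_i ≥ 0 for all i, Σ_i x_i ≤ 1} be the standard d-simplex with barycentric coordinates λ₀(x) = 1 − Σ_i x_i, λ_i(x) = x_i, and element bubble b(x) = Π_{i=0}^d λ_i(x). There exists a constant c > 0, depending only on d, such that for every affine function v : ℝ^d → ℝ one has ∫_Δ |∇(b v)|² ≤ c ∫_Δ v². -/
open MeasureTheory Metric Set
open scoped ENNReal RealInnerProductSpace NNReal Classical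

noncomputable section

abbrev Euc (d : ℕ) : Type := EuclideanSpace ℝ (Fin d)

/-- `T(ω)`: Lipschitz functions on `ℝ^d` vanishing identically outside `ω`. -/
def IsTest {d : ℕ} (ω : Set (Euc d)) (φ : Euc d → ℝ) : Prop :=
  (∃ L : ℝ≥0, LipschitzWith L φ) ∧ ∀ x ∉ ω, φ x = 0

/-- `∫_ω |∇φ|²`. -/
def gradSq {d : ℕ} (ω : Set (Euc d)) (φ : Euc d → ℝ) : ℝ :=
  ∫ x in ω, ‖gradient φ x‖ ^ 2

/-- `∫_ω φ²`. -/
def sqIntg {d : ℕ} (ω : Set (Euc d)) (φ : Euc d → ℝ) : ℝ :=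
  ∫ x in ω, (φ x) ^ 2

/-- squared energy norm `‖φ‖_{E,ω}² = ∫_ω |∇φ|² + κ² ∫_ω φ²`. -/
def energySq {d : ℕ} (κ : ℝ) (ω : Set (Euc d)) (φ : Euc d → ℝ) : ℝ :=
  gradSq ω φ + κ ^ 2 * sqIntg ω φ

/-- local dual norm `‖Λ‖_{*,ω} = sup {Λφ : φ ∈ T(ω), ‖φ‖_{E,ω} ≤ 1}`. -/
def dualNorm {d : ℕ} (κ : ℝ) (ω : Set (Euc d)) (Λ : (Euc d → ℝ) → ℝ) : ℝ≥0∞ :=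
  ⨆ φ ∈ {φ : Euc d → ℝ | IsTest ω φ ∧ energySq κ ω φ ≤ 1}, ENNReal.ofReal (Λ φ)

/-- inradius: supremum of radii of balls contained in `s`. -/
def inradius {d : ℕ} (s : Set (Euc d)) : ℝ :=
  sSup {r : ℝ | ∃ c, Metric.ball c r ⊆ s}

/-- the simplex spanned by an affine basis. -/
def simT {d : ℕ} (B : AffineBasis (Fin (d+1)) ℝ (Euc d)) : Set (Euc d) :=
  convexHull ℝ (Set.range ⇑B)

/-- the face of the simplex opposite to the vertex `z`. -/
def simFace {d : ℕ} (B : AffineBasis (Fin (d+1)) ℝ (Euc d)) (z : Fin (d+1)) : Set (Euc d) :=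
  convexHull ℝ (⇑B '' {y | y ≠ z})

/-- the standard `d`-simplex. -/
def Δstd (d : ℕ) : Set (Euc d) := {x | (∀ i, 0 ≤ x i) ∧ ∑ i, x i ≤ 1}

/-- the element bubble of the standard simplex. -/
def elemBubble (d : ℕ) (x : Euc d) : ℝ := (1 - ∑ i, x i) * ∏ i, x i


lemma aux_isCompact_Δstd (d : ℕ) : IsCompact (Δstd d) := by
  apply Metric.isCompact_of_isClosed_isBounded
  · have : Δstd d = (⋂ i, {x : Euc d | 0 ≤ x i}) ∩ {x : Euc d | ∑ i, x i ≤ 1} := by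
      ext x; simp [Δstd]
    rw [this]
    refine IsClosed.inter (isClosed_iInter fun i => ?_) ?_
    · exact isClosed_le (by fun_prop) (by fun_prop)
    · exact isClosed_le (by fun_prop) (by fun_prop)
  · rw [isBounded_iff_forall_norm_le]
    refine ⟨d, fun x hx => ?_⟩
    have h1 : ∀ i, x i ≤ 1 := fun i =>
      (Finset.single_le_sum (f := fun i => x i) (fun j _ => hx.1 j) (Finset.mem_univ i)).trans hx.2
    rw [EuclideanSpace.norm_eq]
    apply Real.sqrt_le_iff.2
    refine ⟨by positivity, ?_⟩
    calc ∑ i, ‖x i‖ ^ 2 ≤ ∑ i : Fin d, (1:ℝ) := by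
          apply Finset.sum_le_sum
          intro i _
          rw [Real.norm_eq_abs, sq_abs]
          nlinarith [hx.1 i, h1 i]
      _ = d := by simp
      _ ≤ (d:ℝ)^2 := by
          rcases Nat.eq_zero_or_pos d with h | h
          · simp [h]
          · have : (1:ℝ) ≤ d := by exact_mod_cast h
            nlinarith

lemma aux_bubble_contDiff (d : ℕ) : ContDiff ℝ 1 (elemBubble d) := by
  unfold elemBubble
  refine ContDiff.mul (by fun_prop) ?_
  exact contDiff_prod fun i _ => by fun_prop

def auxU (d : ℕ) : Set (Euc d) := {x | (∀ i, 0 < x i) ∧ ∑ i, x i < 1}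

lemma aux_open (d : ℕ) : IsOpen (auxU d) := by
  have : auxU d = (⋂ i, {x : Euc d | 0 < x i}) ∩ {x : Euc d | ∑ i, x i < 1} := by
    ext x; simp [auxU]
  rw [this]
  refine IsOpen.inter (isOpen_iInter_of_finite fun i => ?_) ?_
  · exact isOpen_lt (by fun_prop) (by fun_prop)
  · exact isOpen_lt (by fun_prop) (by fun_prop)

lemma aux_pos (d : ℕ) (p : ℝ × Euc d) (hp : p ≠ 0) :
    0 < ∫ x in Δstd d, (p.1 + inner ℝ p.2 x) ^ 2 := by
  have hc : Continuous fun x : Euc d => (p.1 + inner ℝ p.2 x) ^ 2 := by fun_prop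
  rw [setIntegral_pos_iff_support_of_nonneg_ae (Filter.Eventually.of_forall fun x => by
    simp only [Pi.zero_apply]; positivity)
    (hc.continuousOn.integrableOn_compact (aux_isCompact_Δstd d))]
  have hsub : (Function.support fun x : Euc d => (p.1 + inner ℝ p.2 x) ^ 2) ∩ auxU d ⊆
      (Function.support fun x : Euc d => (p.1 + inner ℝ p.2 x) ^ 2) ∩ Δstd d :=
    inter_subset_inter_right _ fun x hx => ⟨fun i => (hx.1 i).le, hx.2.le⟩
  refine lt_of_lt_of_le ?_ (measure_mono hsub)
  refine IsOpen.measure_pos _ ((hc.isOpen_support).inter (aux_open d)) ?_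
  by_contra hne
  rw [Set.not_nonempty_iff_eq_empty] at hne
  have hz : ∀ x ∈ auxU d, p.1 + inner ℝ p.2 x = 0 := by
    intro x hx
    by_contra h
    have : x ∈ (∅ : Set (Euc d)) := by
      rw [← hne]; exact ⟨by simpa using h, hx⟩
    exact this
  let x0 : Euc d := WithLp.toLp 2 fun _ => 1 / ((d:ℝ) + 1)
  have hx0 : x0 ∈ auxU d := by
    refine ⟨fun i => by simp only [x0]; positivity, ?_⟩
    simp only [x0, Finset.sum_const, Finset.card_univ, Fintype.card_fin, nsmul_eq_mul]
    rw [mul_one_div, div_lt_one (by positivity)]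
    linarith
  have hev : ∀ᶠ t : ℝ in nhds 0, x0 + t • p.2 ∈ auxU d := by
    have hct : Continuous fun t : ℝ => x0 + t • p.2 := by fun_prop
    exact hct.continuousAt.eventually_mem ((aux_open d).mem_nhds (by simpa using hx0))
  obtain ⟨ε, hε, hb⟩ := Metric.eventually_nhds_iff.1 hev
  have h1 := hz _ (hb (y := ε / 2) (by
    rw [Real.dist_eq, sub_zero, abs_of_pos (by positivity)]; linarith))
  have h0 := hz _ hx0
  rw [inner_add_right, real_inner_smul_right, real_inner_self_eq_norm_sq] at h1
  have h2 : ε / 2 * ‖p.2‖ ^ 2 = 0 := by linarith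
  have h3 : p.2 = 0 := by
    rcases mul_eq_zero.1 h2 with h | h
    · linarith
    · simpa using h
  have h4 : p.1 = 0 := by simpa [h3] using h0
  exact hp (Prod.ext h4 h3)

lemma aux_lower (d : ℕ) : ∃ m : ℝ, 0 < m ∧ ∀ p : ℝ × Euc d,
    m * ‖p‖ ^ 2 ≤ ∫ x in Δstd d, (p.1 + inner ℝ p.2 x) ^ 2 := by
  have hcont : Continuous fun p : ℝ × Euc d => ∫ x in Δstd d, (p.1 + inner ℝ p.2 x) ^ 2 := by
    apply continuous_parametric_integral_of_continuous (s := Δstd d) _ (aux_isCompact_Δstd d)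
    unfold Function.uncurry
    fun_prop
  obtain ⟨p0, hp0, hmin⟩ := (isCompact_sphere (0 : ℝ × Euc d) 1).exists_isMinOn
    ⟨((1:ℝ), (0 : Euc d)), by simp [Prod.norm_def]⟩ hcont.continuousOn
  refine ⟨_, aux_pos d p0 (by rintro rfl; simp at hp0), fun p => ?_⟩
  rcases eq_or_ne p 0 with rfl | hp
  · simp
  have hn : 0 < ‖p‖ := norm_pos_iff.2 hp
  have h := hmin (show ‖p‖⁻¹ • p ∈ sphere (0 : ℝ × Euc d) 1 by
    rw [mem_sphere_zero_iff_norm, norm_smul, norm_inv, norm_norm, inv_mul_cancel₀ hn.ne'])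
  simp only [mem_ofPred_eq] at h
  have e : ∫ x in Δstd d, ((‖p‖⁻¹ • p).1 + inner ℝ (‖p‖⁻¹ • p).2 x) ^ 2 =
      (‖p‖⁻¹)^2 * ∫ x in Δstd d, (p.1 + inner ℝ p.2 x) ^ 2 := by
    rw [← integral_const_mul]
    congr 1
    ext x
    simp only [Prod.smul_fst, Prod.smul_snd, smul_eq_mul, real_inner_smul_left]
    ring
  rw [e] at h
  calc _ ≤ ((‖p‖⁻¹)^2 * ∫ x in Δstd d, (p.1 + inner ℝ p.2 x) ^ 2) * ‖p‖^2 := by gcongr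
    _ = _ := by field_simp

lemma aux_grad (d : ℕ) (p : ℝ × Euc d) (x : Euc d) :
    ‖gradient (fun y => elemBubble d y * (p.1 + inner ℝ p.2 y)) x‖ ≤
      (|elemBubble d x| + (1 + ‖x‖) * ‖fderiv ℝ (elemBubble d) x‖) * ‖p‖ := by
  have hb : HasFDerivAt (elemBubble d) (fderiv ℝ (elemBubble d) x) x :=
    ((aux_bubble_contDiff d).differentiable (by norm_num) x).hasFDerivAt
  have hv : HasFDerivAt (fun y : Euc d => p.1 + inner ℝ p.2 y) (innerSL ℝ p.2) x :=
    (innerSL ℝ p.2).hasFDerivAt.const_add p.1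
  have hbv := (hb.mul hv).fderiv
  change fderiv ℝ (fun y => elemBubble d y * (p.1 + inner ℝ p.2 y)) x = _ at hbv
  rw [gradient, LinearIsometryEquiv.norm_map, hbv]
  have h1 : ‖p.1‖ ≤ ‖p‖ := norm_fst_le p
  have h2 : ‖p.2‖ ≤ ‖p‖ := norm_snd_le p
  have h3 : ‖p.1 + inner ℝ p.2 x‖ ≤ ‖p‖ + ‖p‖ * ‖x‖ :=
    (norm_add_le _ _).trans (add_le_add h1 ((norm_inner_le_norm _ _).trans (by gcongr)))
  refine (norm_add_le _ _).trans ?_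
  rw [norm_smul, norm_smul, innerSL_apply_norm]
  calc _ ≤ ‖elemBubble d x‖ * ‖p‖ + (‖p‖ + ‖p‖ * ‖x‖) * ‖fderiv ℝ (elemBubble d) x‖ := by gcongr
    _ = _ := by rw [Real.norm_eq_abs]; ring

theorem elemBubble_inverse_estimate (d : ℕ) (hd : 1 ≤ d) :
    ∃ c : ℝ, 0 < c ∧ ∀ v : Euc d →ᵃ[ℝ] ℝ,
      (∫ x in Δstd d, ‖gradient (fun y => elemBubble d y * v y) x‖ ^ 2)
        ≤ c * ∫ x in Δstd d, (v x) ^ 2 := by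
  obtain ⟨m, hm, hlow⟩ := aux_lower d
  have hK := aux_isCompact_Δstd d
  have hcf : Continuous (fderiv ℝ (elemBubble d)) :=
    (aux_bubble_contDiff d).continuous_fderiv (by norm_num)
  have hcb : Continuous (elemBubble d) := (aux_bubble_contDiff d).continuous
  obtain ⟨B, hB⟩ := hK.exists_bound_of_continuousOn (f := fun x : Euc d =>
    |elemBubble d x| + (1 + ‖x‖) * ‖fderiv ℝ (elemBubble d) x‖) (by fun_prop)
  set V := volume.real (Δstd d) with hV
  have hV0 : 0 ≤ V := measureReal_nonneg
  refine ⟨(B ^ 2 * V + 1) / m, by positivity, fun v => ?_⟩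
  let p : ℝ × Euc d := (v 0, (InnerProductSpace.toDual ℝ (Euc d)).symm
    (LinearMap.toContinuousLinearMap v.linear))
  have hv : ∀ x, v x = p.1 + inner ℝ p.2 x := by
    intro x
    simp only [p, InnerProductSpace.toDual_symm_apply, LinearMap.coe_toContinuousLinearMap']
    have := v.map_vadd 0 x
    simp only [vadd_eq_add, add_zero] at this
    rw [this]; ring
  simp only [hv]
  have hup : ∫ x in Δstd d, ‖gradient (fun y => elemBubble d y * (p.1 + inner ℝ p.2 y)) x‖ ^ 2
      ≤ (B * ‖p‖) ^ 2 * V := by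
    refine (le_abs_self _).trans ?_
    rw [← Real.norm_eq_abs]
    refine norm_setIntegral_le_of_norm_le_const hK.measure_lt_top fun x hx => ?_
    rw [norm_pow, norm_norm]
    have := (le_abs_self _).trans (hB x hx)
    gcongr
    refine (aux_grad d p x).trans ?_
    gcongr
  calc _ ≤ (B * ‖p‖) ^ 2 * V := hup
    _ ≤ (B ^ 2 * V + 1) * ‖p‖ ^ 2 := by nlinarith [sq_nonneg ‖p‖]
    _ = (B ^ 2 * V + 1) / m * (m * ‖p‖ ^ 2) := by field_simp
    _ ≤ _ := by gcongr; exact hlow p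
end
end

section
/- Let d ≥ 1, κ > 0, and let T ⊂ ℝ^d be a nondegenerate d-simplex with diameter h_T and shape parameter μ := h_T/ρ_T. There exist constants c, C > 0 depending only on d and μ such that for every affine function r : ℝ^d → ℝ: c · min{h_T, κ^{−1}} · ‖r‖_{L²(T)} ≤ sup{ ∫_T r φ : φ ∈ T(int T), ‖φ‖_{E,int T} ≤ 1 } ≤ C · min{h_T, κ^{−1}} · ‖r‖_{L²(T)}. -/
open MeasureTheory Metric Set
open scoped ENNReal RealInnerProductSpace NNReal Classical

noncomputable section

lemma cs_aux {α : Type*} [MeasurableSpace α] {m : Measure α} {f g : α → ℝ}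
    (hf : Integrable (fun x => f x ^ 2) m) (hg : Integrable (fun x => g x ^ 2) m)
    (hfg : Integrable (fun x => f x * g x) m) :
    (∫ x, f x * g x ∂m) ^ 2 ≤ (∫ x, f x ^ 2 ∂m) * ∫ x, g x ^ 2 ∂m := by
  have h : ∀ t : ℝ, 0 ≤ (∫ x, g x ^ 2 ∂m) * (t * t) + (2 * ∫ x, f x * g x ∂m) * t
      + ∫ x, f x ^ 2 ∂m := by
    intro t
    have h1 : 0 ≤ ∫ x, (f x + t * g x) ^ 2 ∂m := integral_nonneg fun x => sq_nonneg _
    have h2 : ∫ x, (f x + t * g x) ^ 2 ∂m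
        = ∫ x, (f x ^ 2 + (2 * t) * (f x * g x)) + (t * t) * g x ^ 2 ∂m := by
      congr 1; ext x; ring
    have h3 : Integrable (fun x => f x ^ 2 + (2 * t) * (f x * g x)) m := hf.add (hfg.const_mul _)
    rw [h2, integral_add h3 (hg.const_mul _),
      integral_add hf (hfg.const_mul _), integral_const_mul, integral_const_mul] at h1
    linarith
  have := discrim_le_zero h
  unfold discrim at this
  nlinarith

lemma norm_gradient_eq {d : ℕ} (φ : Euc d → ℝ) (x : Euc d) :
    ‖gradient φ x‖ = ‖fderiv ℝ φ x‖ := by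
  unfold gradient
  exact LinearIsometryEquiv.norm_map _ _

lemma test_bounded {d : ℕ} {ω : Set (Euc d)} (hb : Bornology.IsBounded ω) {φ : Euc d → ℝ}
    (hφ : IsTest ω φ) : HasCompactSupport φ ∧ ∃ M : ℝ, 0 ≤ M ∧ ∀ x, |φ x| ≤ M := by
  obtain ⟨⟨L, hL⟩, h0⟩ := hφ
  have hc : HasCompactSupport φ := by
    refine HasCompactSupport.intro (K := closure ω) hb.isCompact_closure ?_
    intro x hx
    exact h0 x fun h => hx (subset_closure h)
  refine ⟨hc, ?_⟩
  obtain ⟨M, hM⟩ := hc.exists_bound_of_continuous hL.continuous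
  exact ⟨M, (norm_nonneg _).trans (hM 0), hM⟩

lemma friedrichs {d : ℕ} {ω : Set (Euc d)} (hω : MeasurableSet ω) (hb : Bornology.IsBounded ω)
    (i : Fin d) (a h : ℝ) (h0 : 0 ≤ h) (hh : ∀ x ∈ ω, |x i - a| ≤ h) {φ : Euc d → ℝ}
    (hφ : IsTest ω φ) : sqIntg ω φ ≤ (2 * h) ^ 2 * gradSq ω φ := by
  obtain ⟨hc, M, hM0, hM⟩ := test_bounded hb hφ
  obtain ⟨⟨L, hL⟩, hz⟩ := hφ
  have hfin : volume ω < ∞ := hb.measure_lt_top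
  have : IsFiniteMeasure (volume.restrict ω) := ⟨by simpa using hfin⟩
  set v : Euc d := EuclideanSpace.single i 1 with hv
  have hvn : ‖v‖ = 1 := by simp [hv]
  -- the weight
  have hℓ : LipschitzWith 1 (fun x : Euc d => x i - a) := by
    refine LipschitzWith.of_dist_le_mul fun x y => ?_
    rw [Real.dist_eq, dist_eq_norm]
    have := EuclideanSpace.norm_eq (x - y)
    have h1 : |(x - y) i| ≤ ‖x - y‖ := by
      simpa using PiLp.norm_apply_le (x - y) i
    have h2 : x i - a - (y i - a) = (x - y) i := by simp
    rw [h2]; simpa using h1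
  have hsq : LipschitzWith (2 * M.toNNReal * L) (fun x => φ x ^ 2) := by
    refine LipschitzWith.of_dist_le_mul fun x y => ?_
    rw [Real.dist_eq]
    have h1 := hL.dist_le_mul x y
    rw [Real.dist_eq] at h1
    have h2 : φ x ^ 2 - φ y ^ 2 = (φ x + φ y) * (φ x - φ y) := by ring
    rw [h2, abs_mul]
    have h3 : |φ x + φ y| ≤ 2 * M := (abs_add_le _ _).trans (by linarith [hM x, hM y])
    push_cast
    rw [Real.coe_toNNReal M hM0]
    calc _ ≤ (2 * M) * (L * dist x y) := by gcongr
      _ = _ := by ring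
  have hcsq : HasCompactSupport (fun x => φ x ^ 2) := by
    refine hc.comp_left (g := fun t : ℝ => t ^ 2) (by simp)
  have key := hℓ.integral_lineDeriv_mul_eq (μ := volume) hsq hcsq v
  have hld : ∀ x, lineDeriv ℝ (fun x : Euc d => x i - a) x v = 1 := by
    intro x
    have : HasLineDerivAt ℝ (fun x : Euc d => x i - a) 1 x v := by
      unfold HasLineDerivAt
      have : (fun t : ℝ => (x + t • v) i - a) = fun t : ℝ => t + (x i - a) := by
        ext t; simp [hv]; ring
      rw [this]
      exact (hasDerivAt_id (0:ℝ)).add_const _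
    exact this.lineDeriv
  simp only [hld, one_mul] at key
  have hL1 : ∫ x, φ x ^ 2 = sqIntg ω φ := by
    unfold sqIntg
    rw [setIntegral_eq_integral_of_forall_compl_eq_zero]
    intro x hx; simp [hz x hx]
  rw [hL1] at key
  have hae : ∀ᵐ x ∂(volume : Measure (Euc d)),
      lineDeriv ℝ (fun x => φ x ^ 2) x (-v) * (x i - a)
        = -(2 * φ x * fderiv ℝ φ x v) * (x i - a) := by
    filter_upwards [hL.ae_differentiableAt] with x hx
    congr 1
    have hx2 : DifferentiableAt ℝ (fun x => φ x ^ 2) x := hx.pow 2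
    rw [hx2.lineDeriv_eq_fderiv, fderiv_fun_pow 2 hx]
    simp
  rw [integral_congr_ae hae] at key
  rw [← setIntegral_eq_integral_of_forall_compl_eq_zero (s := ω)
    (fun x hx => by simp [hz x hx])] at key
  have hgm : Measurable (fun x => ‖gradient φ x‖) := by
    simp_rw [norm_gradient_eq]
    exact (measurable_fderiv ℝ φ).norm
  have hgb : ∀ x, ‖gradient φ x‖ ≤ L := fun x => by
    rw [norm_gradient_eq]; exact norm_fderiv_le_of_lipschitz ℝ hL
  have hφm : Measurable φ := hL.continuous.measurable
  have i1 : Integrable (fun x => |φ x| ^ 2) (volume.restrict ω) := by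
    refine Integrable.of_bound (hφm.norm.pow_const 2).aestronglyMeasurable (M ^ 2) ?_
    refine Filter.Eventually.of_forall fun x => ?_
    rw [Real.norm_of_nonneg (by positivity)]
    gcongr; exact hM x
  have i2 : Integrable (fun x => (2 * h * ‖gradient φ x‖) ^ 2) (volume.restrict ω) := by
    refine Integrable.of_bound ((hgm.const_mul (2 * h)).pow_const 2).aestronglyMeasurable
      ((2 * h * L) ^ 2) ?_
    refine Filter.Eventually.of_forall fun x => ?_
    rw [Real.norm_of_nonneg (by positivity)]
    gcongr; exact hgb x
  have i3 : Integrable (fun x => |φ x| * (2 * h * ‖gradient φ x‖)) (volume.restrict ω) := by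
    refine Integrable.of_bound (hφm.norm.mul (hgm.const_mul (2 * h))).aestronglyMeasurable
      (M * (2 * h * L)) ?_
    refine Filter.Eventually.of_forall fun x => ?_
    rw [Real.norm_of_nonneg (by positivity)]
    gcongr
    · exact hM x
    · exact hgb x
  have hcs := cs_aux i1 i2 i3
  have hle : sqIntg ω φ ≤ ∫ x in ω, |φ x| * (2 * h * ‖gradient φ x‖) := by
    rw [key]
    refine (le_abs_self _).trans ?_
    rw [← Real.norm_eq_abs]
    refine norm_integral_le_of_norm_le i3 ?_
    filter_upwards [ae_restrict_mem hω] with x hx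
    rw [Real.norm_eq_abs, abs_mul, abs_neg, abs_mul, abs_mul, norm_gradient_eq]
    have h1 : |fderiv ℝ φ x v| ≤ ‖fderiv ℝ φ x‖ := by
      simpa [hvn] using (fderiv ℝ φ x).le_opNorm v
    calc _ ≤ (|2| * |φ x| * ‖fderiv ℝ φ x‖) * h := by gcongr; exact hh x hx
      _ = _ := by rw [abs_two]; ring
  have e1 : ∫ x in ω, |φ x| ^ 2 = sqIntg ω φ := by simp [sqIntg]
  have e2 : ∫ x in ω, (2 * h * ‖gradient φ x‖) ^ 2 = (2 * h) ^ 2 * gradSq ω φ := by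
    simp_rw [mul_pow _ (‖_‖), integral_const_mul]; rfl
  rw [e1, e2] at hcs
  have hS0 : 0 ≤ sqIntg ω φ := integral_nonneg fun x => sq_nonneg _
  have hG0 : 0 ≤ gradSq ω φ := integral_nonneg fun x => sq_nonneg _
  rcases hS0.eq_or_lt with h' | h'
  · rw [← h']; positivity
  · have : sqIntg ω φ ^ 2 ≤ sqIntg ω φ * ((2 * h) ^ 2 * gradSq ω φ) :=
      le_trans (by gcongr) hcs
    nlinarith

lemma upper_aux {d : ℕ} (hd : 1 ≤ d) (κ : ℝ) (hκ : 0 < κ)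
    {T : Set (Euc d)} (hT : IsCompact T) (hne : T.Nonempty) (r : Euc d → ℝ) (hr : Continuous r)
    (φ : Euc d → ℝ) (hφ : IsTest (interior T) φ) (hE : energySq κ (interior T) φ ≤ 1) :
    ∫ x in T, r x * φ x ≤ 2 * min (Metric.diam T) κ⁻¹ * Real.sqrt (sqIntg T r) := by
  obtain ⟨p, hp⟩ := hne
  have hF := friedrichs isOpen_interior.measurableSet (hT.isBounded.subset interior_subset)
    ⟨0, hd⟩ (p ⟨0, hd⟩) (Metric.diam T) Metric.diam_nonneg (fun x hx => by
      have h1 : ‖(x - p) ⟨0, hd⟩‖ ≤ ‖x - p‖ := PiLp.norm_apply_le _ _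
      have h2 := Metric.dist_le_diam_of_mem hT.isBounded (interior_subset hx) hp
      rw [dist_eq_norm] at h2
      simpa using h1.trans h2) hφ
  have hφc : Continuous φ := hφ.1.choose_spec.continuous
  have hS : sqIntg T φ = sqIntg (interior T) φ := by
    unfold sqIntg
    rw [setIntegral_eq_integral_of_forall_compl_eq_zero,
      setIntegral_eq_integral_of_forall_compl_eq_zero]
    · intro x hx; simp [hφ.2 x hx]
    · intro x hx; simp [hφ.2 x (fun h => hx (interior_subset h))]
  have hcs := cs_aux (m := volume.restrict T) (f := r) (g := φ)
    ((hr.pow 2).continuousOn.integrableOn_compact hT)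
    ((hφc.pow 2).continuousOn.integrableOn_compact hT)
    ((hr.mul hφc).continuousOn.integrableOn_compact hT)
  change _ ≤ sqIntg T r * sqIntg T φ at hcs
  have hS0 : 0 ≤ sqIntg (interior T) φ := integral_nonneg fun x => sq_nonneg _
  have hG0 : 0 ≤ gradSq (interior T) φ := integral_nonneg fun x => sq_nonneg _
  have hR0 : 0 ≤ sqIntg T r := integral_nonneg fun x => sq_nonneg _
  have hm0 : 0 ≤ min (Metric.diam T) κ⁻¹ := le_min Metric.diam_nonneg (by positivity)
  unfold energySq at hE
  have hm : sqIntg (interior T) φ ≤ (2 * min (Metric.diam T) κ⁻¹) ^ 2 := by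
    rcases min_choice (Metric.diam T) κ⁻¹ with h | h <;> rw [h]
    · refine hF.trans ?_
      have : gradSq (interior T) φ ≤ 1 := by
        have : 0 ≤ κ ^ 2 * sqIntg (interior T) φ := by positivity
        linarith
      nlinarith [sq_nonneg (2 * Metric.diam T)]
    · have h1 : κ ^ 2 * sqIntg (interior T) φ ≤ 1 := by linarith
      have h2 : sqIntg (interior T) φ ≤ (κ⁻¹) ^ 2 := by
        rw [inv_pow, ← one_div, le_div_iff₀ (by positivity)]; linarith
      nlinarith [sq_nonneg κ⁻¹]
  refine abs_le_of_sq_le_sq' ?_ (by positivity) |>.2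
  rw [mul_pow, Real.sq_sqrt hR0]
  calc _ ≤ _ := hcs
    _ ≤ sqIntg T r * (2 * min (Metric.diam T) κ⁻¹) ^ 2 := by rw [hS]; gcongr
    _ = _ := by ring

lemma prod_diff {ι : Type*} (s : Finset ι) (a b : ι → ℝ) (D : ℝ) (ha : ∀ i, |a i| ≤ 1)
    (hb : ∀ i, |b i| ≤ 1) (hab : ∀ i, |a i - b i| ≤ D) :
    |∏ i ∈ s, a i - ∏ i ∈ s, b i| ≤ s.card * D := by
  induction s using Finset.induction_on with
  | empty => simp
  | insert j s hj ih =>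
    rw [Finset.prod_insert hj, Finset.prod_insert hj, Finset.card_insert_of_notMem hj]
    have e : a j * ∏ i ∈ s, a i - b j * ∏ i ∈ s, b i
      = a j * (∏ i ∈ s, a i - ∏ i ∈ s, b i) + (a j - b j) * ∏ i ∈ s, b i := by ring
    have hp : |∏ i ∈ s, b i| ≤ 1 := by
      rw [Finset.abs_prod]
      exact Finset.prod_le_one (fun i _ => abs_nonneg _) (fun i _ => hb i)
    rw [e]
    refine (abs_add_le _ _).trans ?_
    rw [abs_mul, abs_mul]
    have h1 : |a j| * |∏ i ∈ s, a i - ∏ i ∈ s, b i| ≤ 1 * (s.card * D) := by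
      gcongr; exact ha j
    have hD : 0 ≤ D := (abs_nonneg _).trans (hab j)
    have h2 : |a j - b j| * |∏ i ∈ s, b i| ≤ D * 1 := by
      gcongr; exact hab j
    push_cast
    linarith

lemma clip_lip (l M u v : ℝ) : |max l (min u M) - max l (min v M)| ≤ |u - v| := by
  have h1 : |max l (min u M) - max l (min v M)| ≤ |min u M - min v M| := by
    have := abs_max_sub_max_le_max l (min u M) l (min v M)
    simpa using this
  have h2 : |min u M - min v M| ≤ |u - v| := by
    have := abs_min_sub_min_le_max u M v M
    simpa using this
  exact h1.trans h2

lemma coord_le_one {d : ℕ} (B : AffineBasis (Fin (d+1)) ℝ (Euc d)) {x : Euc d}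
    (hx : ∀ i, 0 ≤ B.coord i x) (i : Fin (d+1)) : B.coord i x ≤ 1 := by
  rw [← B.sum_coord_apply_eq_one x]
  exact Finset.single_le_sum (f := fun i => B.coord i x) (fun j _ => hx j) (Finset.mem_univ i)

lemma mem_simT {d : ℕ} (B : AffineBasis (Fin (d+1)) ℝ (Euc d)) (x : Euc d) :
    x ∈ simT B ↔ ∀ i, 0 ≤ B.coord i x := by
  unfold simT; rw [AffineBasis.convexHull_eq_nonneg_coord]; rfl

lemma isCompact_simT {d : ℕ} (B : AffineBasis (Fin (d+1)) ℝ (Euc d)) : IsCompact (simT B) :=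
  (Set.finite_range _).isCompact_convexHull ℝ

lemma coord_lip {d : ℕ} (B : AffineBasis (Fin (d+1)) ℝ (Euc d)) {c : Euc d} {ρ : ℝ} (hρ : 0 < ρ)
    (hball : Metric.ball c ρ ⊆ simT B) (i : Fin (d+1)) (x y : Euc d) :
    |B.coord i x - B.coord i y| ≤ 2 / ρ * dist x y := by
  rcases eq_or_ne x y with rfl | hxy
  · simp
  have hn : 0 < ‖x - y‖ := norm_pos_iff.2 (sub_ne_zero.2 hxy)
  set u : Euc d := (ρ / 2 / ‖x - y‖) • (x - y) with hu
  have hun : ‖u‖ = ρ / 2 := by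
    rw [hu, norm_smul, Real.norm_of_nonneg (by positivity)]; field_simp
  have hc : c ∈ simT B := hball (Metric.mem_ball_self hρ)
  have hcu : u + c ∈ simT B := hball (by
    rw [Metric.mem_ball, dist_eq_norm]; simp [hun]; linarith)
  have e1 : B.coord i (u + c) - B.coord i c = (B.coord i).linear u := by
    have := (B.coord i).linearMap_vsub (u + c) c
    simpa using this.symm
  have e2 : B.coord i x - B.coord i y = (B.coord i).linear (x - y) := by
    have := (B.coord i).linearMap_vsub x y
    simpa using this.symm
  rw [mem_simT] at hc hcu
  have h1 : |(B.coord i).linear u| ≤ 1 := by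
    rw [← e1, abs_le]
    constructor <;> linarith [hc i, hcu i, coord_le_one B hc i, coord_le_one B hcu i]
  rw [hu, map_smul, smul_eq_mul, abs_mul, abs_of_pos (by positivity)] at h1
  rw [e2, dist_eq_norm]
  have : |(B.coord i).linear (x - y)| = 2 / ρ * ‖x - y‖ *
    (ρ / 2 / ‖x - y‖ * |(B.coord i).linear (x - y)|) := by field_simp
  rw [this]
  exact mul_le_of_le_one_right (by positivity) h1

lemma affine_eq_sum {d : ℕ} (B : AffineBasis (Fin (d+1)) ℝ (Euc d)) (r : Euc d →ᵃ[ℝ] ℝ)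
    (x : Euc d) : r x = ∑ i, B.coord i x * r (B i) := by
  have h1 := B.affineCombination_coord_eq_self x
  have h2 := Finset.univ.map_affineCombination B (fun i => B.coord i x)
    (B.sum_coord_apply_eq_one x) r
  rw [h1, Finset.affineCombination_eq_linear_combination _ _ _ (B.sum_coord_apply_eq_one x)] at h2
  simpa using h2

lemma exists_ball {d : ℕ} (s : Set (Euc d)) (μ : ℝ) (h : 0 < Metric.diam s)
    (hs : Metric.diam s ≤ μ * inradius s) :
    0 < μ ∧ ∃ c ρ, 0 < ρ ∧ Metric.ball c ρ ⊆ s ∧ Metric.diam s ≤ 2 * μ * ρ := by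
  have h0 : (0:ℝ) ∈ {r : ℝ | ∃ c, Metric.ball c r ⊆ s} := ⟨0, by simp⟩
  have hi : 0 ≤ inradius s := by
    unfold inradius
    by_cases hb : BddAbove {r : ℝ | ∃ c, Metric.ball c r ⊆ s}
    · exact le_csSup hb h0
    · rw [Real.sSup_of_not_bddAbove hb]
  have hμ : 0 < μ := by
    by_contra hc; push Not at hc
    nlinarith
  have hi' : 0 < inradius s := by
    rcases hi.eq_or_lt with h' | h'
    · rw [← h'] at hs; linarith
    · exact h'
  refine ⟨hμ, ?_⟩
  obtain ⟨ρ, ⟨c, hc⟩, hρ⟩ := exists_lt_of_lt_csSup ⟨0, h0⟩ (half_lt_self hi')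
  change inradius s / 2 < ρ at hρ
  refine ⟨c, ρ, by linarith, hc, ?_⟩
  nlinarith

/-- The quantitative lower bound for the bubble-weighted integral. -/
lemma bubble_lower {d : ℕ} (B : AffineBasis (Fin (d+1)) ℝ (Euc d)) (r : Euc d →ᵃ[ℝ] ℝ)
    (hrc : Continuous r) (hcc : ∀ i, Continuous (B.coord i)) (i0 : Fin (d+1))
    (hM : ∀ i, |r (B i)| ≤ |r (B i0)|) :
    |r (B i0)| ^ 2 / 4 * (1 / (32 * (d + 1))) ^ (d + 1) * ((1 / 16) ^ d * volume.real (simT B))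
      ≤ ∫ x in simT B, r x ^ 2 * ∏ i, B.coord i x := by
  set M := |r (B i0)| with hMdef
  have hM0 : 0 ≤ M := abs_nonneg _
  have hT := isCompact_simT B
  set q : Euc d := Finset.univ.centroid ℝ B
  have hq : ∀ i, B.coord i q = ((d:ℝ) + 1)⁻¹ := by
    intro i
    have := B.coord_apply_centroid (s := Finset.univ) (Finset.mem_univ i)
    rw [this]; simp
  set p : Euc d := AffineMap.lineMap (B i0) q (1 / 16 : ℝ) with hp
  set S := AffineMap.homothety p (1 / 16 : ℝ) '' simT B with hS
  have hvol : volume.real S = (1 / 16) ^ d * volume.real (simT B) := by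
    rw [Measure.real, hS, Measure.addHaar_image_homothety, ENNReal.toReal_mul]
    rw [ENNReal.toReal_ofReal (abs_nonneg _), abs_of_nonneg (by positivity)]
    simp [Measure.real]
  have hSc : IsCompact S := hT.image (AffineMap.homothety_continuous p _)
  have hcp : ∀ i, 1 / (16 * ((d:ℝ) + 1)) ≤ B.coord i p := by
    intro i
    rw [hp, AffineMap.apply_lineMap, AffineMap.lineMap_apply_ring', hq, B.coord_apply]
    have : 1 / (16 * ((d:ℝ) + 1)) = 1/16 * ((d:ℝ) + 1)⁻¹ := by field_simp
    rw [this]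
    split_ifs <;> linarith
  have hcp0 : 15 / 16 ≤ B.coord i0 p := by
    rw [hp, AffineMap.apply_lineMap, AffineMap.lineMap_apply_ring', hq, B.coord_apply_eq]
    have : 0 ≤ ((d:ℝ) + 1)⁻¹ := by positivity
    linarith
  have hcS : ∀ x ∈ simT B, ∀ i, B.coord i (AffineMap.homothety p (1/16 : ℝ) x)
      = 15 / 16 * B.coord i p + 1 / 16 * B.coord i x := by
    intro x _ i
    rw [AffineMap.homothety_eq_lineMap, AffineMap.apply_lineMap, AffineMap.lineMap_apply_ring']
    ring
  have hpos : (0:ℝ) < 1 / (16 * ((d:ℝ) + 1)) := by positivity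
  have hST : S ⊆ simT B := by
    rintro _ ⟨x, hx, rfl⟩
    rw [mem_simT]
    intro i
    rw [hcS x hx]
    have := (mem_simT B x).1 hx i
    linarith [hcp i]
  have hint : IntegrableOn (fun x => r x ^ 2 * ∏ i, B.coord i x) (simT B) :=
    ((hrc.pow 2).mul (continuous_finsetProd _ fun i _ => hcc i)).continuousOn.integrableOn_compact
      hT
  have hnn : ∀ x ∈ simT B, 0 ≤ r x ^ 2 * ∏ i, B.coord i x := fun x hx =>
    mul_nonneg (sq_nonneg _) (Finset.prod_nonneg fun i _ => (mem_simT B x).1 hx i)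
  rw [← hvol]
  have hptw : ∀ y ∈ S, M ^ 2 / 4 * (1 / (32 * (d + 1))) ^ (d + 1)
      ≤ r y ^ 2 * ∏ i, B.coord i y := by
    intro y hy
    have hyT := (mem_simT B y).1 (hST hy)
    obtain ⟨x, hx, hxy⟩ := hy
    have hxT := (mem_simT B x).1 hx
    have hc1 : ∀ i, 1 / (32 * ((d:ℝ) + 1)) ≤ B.coord i y := by
      intro i
      rw [← hxy, hcS x hx]
      have h1 := hcp i
      have h2 : 1 / (32 * ((d:ℝ) + 1)) = 1 / 2 * (1 / (16 * ((d:ℝ) + 1))) := by field_simp; norm_num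
      rw [h2]
      linarith [hxT i]
    have hc0 : 3 / 4 ≤ B.coord i0 y := by
      rw [← hxy, hcS x hx]; linarith [hxT i0]
    have hprod : (1 / (32 * ((d:ℝ) + 1))) ^ (d + 1) ≤ ∏ i, B.coord i y := by
      have := Finset.prod_le_prod (s := Finset.univ) (f := fun _ : Fin (d+1) => 1 / (32 * ((d:ℝ) + 1)))
        (g := fun i => B.coord i y) (fun i _ => by positivity) (fun i _ => hc1 i)
      simpa using this
    have hry : M / 2 ≤ |r y| := by
      have h1 : r (B i0) - r y = ∑ i, B.coord i y * (r (B i0) - r (B i)) := by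
        simp_rw [mul_sub, Finset.sum_sub_distrib, ← Finset.sum_mul, B.sum_coord_apply_eq_one]
        rw [← affine_eq_sum, one_mul]
      have h2 : |r (B i0) - r y| ≤ 2 * M * (1 - B.coord i0 y) := by
        rw [h1, ← B.sum_coord_apply_eq_one y, ← Finset.add_sum_erase _ _ (Finset.mem_univ i0),
          sub_self, mul_zero, zero_add,
          ← Finset.add_sum_erase _ (fun i => B.coord i y) (Finset.mem_univ i0), add_sub_cancel_left,
          Finset.mul_sum]
        refine (Finset.abs_sum_le_sum_abs _ _).trans (Finset.sum_le_sum fun i _ => ?_)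
        rw [abs_mul, abs_of_nonneg (hyT i), mul_comm]
        have h3 : |r (B i0) - r (B i)| ≤ 2 * M := (abs_sub _ _).trans (by linarith [hM i])
        exact mul_le_mul_of_nonneg_right h3 (hyT i)
      have h4 : M - |r y| ≤ |r (B i0) - r y| := abs_sub_abs_le_abs_sub _ _
      nlinarith
    have hry2 : M ^ 2 / 4 ≤ r y ^ 2 := by
      rw [← sq_abs (r y)]; nlinarith
    gcongr
  calc _ ≤ ∫ x in S, r x ^ 2 * ∏ i, B.coord i x := by
        have := setIntegral_mono_on (f := fun _ => M ^ 2 / 4 * (1 / (32 * ((d:ℝ) + 1))) ^ (d + 1))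
          (integrableOn_const hSc.measure_lt_top.ne) (hint.mono_set hST) hSc.measurableSet hptw
        rw [setIntegral_const, smul_eq_mul] at this
        linarith
    _ ≤ _ := by
        refine setIntegral_mono_set hint ?_ (Filter.Eventually.of_forall hST)
        exact (ae_restrict_iff' hT.measurableSet).2 (Filter.Eventually.of_forall hnn)

lemma lower_aux {d : ℕ} (κ μ : ℝ) (hκ : 0 < κ) (hμ : 0 < μ)
    (B : AffineBasis (Fin (d+1)) ℝ (Euc d)) (r : Euc d →ᵃ[ℝ] ℝ)
    (hrc : Continuous r) (hcc : ∀ i, Continuous (B.coord i)) (i0 : Fin (d+1))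
    (hM : ∀ i, |r (B i)| ≤ |r (B i0)|) (hMpos : 0 < |r (B i0)|)
    (hh : 0 < Metric.diam (simT B)) (hV : 0 < volume.real (simT B))
    {c : Euc d} {ρ : ℝ} (hρ : 0 < ρ)
    (hball : Metric.ball c ρ ⊆ simT B) (hdiam : Metric.diam (simT B) ≤ 2 * μ * ρ) :
    ∃ φ, IsTest (interior (simT B)) φ ∧ energySq κ (interior (simT B)) φ ≤ 1 ∧
      (1 / (32 * ((d:ℝ) + 1))) ^ (d + 1) * (1 / 16) ^ d / (4 * Real.sqrt ((8 * (d + 1) * μ) ^ 2 + 1))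
        * min (Metric.diam (simT B)) κ⁻¹ * Real.sqrt (sqIntg (simT B) (fun x => r x))
        ≤ ∫ x in simT B, r x * φ x := by
  have hlow := bubble_lower B r hrc hcc i0 hM
  set M := |r (B i0)| with hMdef
  set h := Metric.diam (simT B) with hhdef
  set V := volume.real (simT B) with hVdef
  set K := Real.sqrt ((8 * (d + 1) * μ) ^ 2 + 1) with hK
  have hKpos : 0 < K := Real.sqrt_pos.2 (by positivity)
  have hKsq : K ^ 2 = (8 * (d + 1) * μ) ^ 2 + 1 := Real.sq_sqrt (by positivity)
  set m := min h κ⁻¹ with hm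
  have hmpos : 0 < m := lt_min hh (by positivity)
  have hT := isCompact_simT B
  have hTfin : volume (simT B) < ∞ := hT.measure_lt_top
  -- bound for `r`
  have hrT : ∀ x ∈ simT B, |r x| ≤ M := by
    intro x hx
    have hx' := (mem_simT B x).1 hx
    rw [affine_eq_sum B r x, ← one_mul M, ← B.sum_coord_apply_eq_one x, Finset.sum_mul]
    refine (Finset.abs_sum_le_sum_abs _ _).trans (Finset.sum_le_sum fun i _ => ?_)
    rw [abs_mul, abs_of_nonneg (hx' i)]
    exact mul_le_mul_of_nonneg_left (hM i) (hx' i)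
  have hrlip : ∀ x y, |r x - r y| ≤ (d + 1) * (2 / ρ * dist x y) * M := by
    intro x y
    rw [affine_eq_sum B r x, affine_eq_sum B r y, ← Finset.sum_sub_distrib]
    refine (Finset.abs_sum_le_sum_abs _ _).trans ?_
    calc _ ≤ ∑ i : Fin (d+1), 2 / ρ * dist x y * M := by
          refine Finset.sum_le_sum fun i _ => ?_
          rw [← sub_mul, abs_mul]
          gcongr
          · exact coord_lip B hρ hball i x y
          · exact hM i
      _ = _ := by simp; ring
  -- the bubble and the clipped residual
  set R : Euc d → ℝ := fun x => max (-M) (min (r x) M) with hR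
  set b : Euc d → ℝ := fun x => ∏ i, max 0 (min (B.coord i x) 1) with hb
  have hRM : ∀ x, |R x| ≤ M := fun x =>
    abs_le.2 ⟨le_max_left _ _, max_le (by linarith) (min_le_right _ _)⟩
  have hψ : ∀ (x : Euc d) (i : Fin (d+1)), |max 0 (min (B.coord i x) 1)| ≤ 1 := fun x i => by
    rw [abs_of_nonneg (le_max_left _ _)]
    exact max_le zero_le_one (min_le_right _ _)
  have hb1 : ∀ x, |b x| ≤ 1 := fun x => by
    rw [hb, Finset.abs_prod]
    exact Finset.prod_le_one (fun i _ => abs_nonneg _) (fun i _ => hψ x i)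
  have hblip : ∀ x y, |b x - b y| ≤ (d + 1) * (2 / ρ * dist x y) := by
    intro x y
    have := prod_diff Finset.univ (fun i => max 0 (min (B.coord i x) 1))
      (fun i => max 0 (min (B.coord i y) 1)) (2 / ρ * dist x y) (hψ x) (hψ y)
      (fun i => (clip_lip _ _ _ _).trans (coord_lip B hρ hball i x y))
    simpa using this
  have hglip : ∀ x y, |R x * b x - R y * b y| ≤ 8 * (d + 1) * μ * M / h * dist x y := by
    intro x y
    have e : R x * b x - R y * b y = (R x - R y) * b x + R y * (b x - b y) := by ring
    rw [e]
    refine (abs_add_le _ _).trans ?_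
    rw [abs_mul, abs_mul]
    have h1 : |R x - R y| * |b x| ≤ ((d + 1) * (2 / ρ * dist x y) * M) * 1 := by
      gcongr
      · exact (clip_lip _ _ _ _).trans (hrlip x y)
      · exact hb1 x
    have h2 : |R y| * |b x - b y| ≤ M * ((d + 1) * (2 / ρ * dist x y)) := by
      gcongr
      · exact hRM y
      · exact hblip x y
    have h3 : 1 / ρ ≤ 2 * μ / h := by
      rw [div_le_div_iff₀ hρ hh]; linarith
    calc _ ≤ 4 * (d + 1) * M * dist x y * (1 / ρ) := by
          refine (add_le_add h1 h2).trans (le_of_eq ?_); ring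
      _ ≤ 4 * (d + 1) * M * dist x y * (2 * μ / h) := by gcongr
      _ = _ := by ring
  -- scaling
  set a := m / (K * M * Real.sqrt V) with ha
  have hsV : 0 < Real.sqrt V := Real.sqrt_pos.2 hV
  have hapos : 0 < a := by positivity
  set φ : Euc d → ℝ := fun x => a * (R x * b x) with hφ
  set L := a * (8 * (d + 1) * μ * M / h) with hLdef
  have hL0 : 0 ≤ L := by positivity
  have hφlip : LipschitzWith L.toNNReal φ := by
    refine LipschitzWith.of_dist_le_mul fun x y => ?_
    rw [Real.coe_toNNReal L hL0, Real.dist_eq, hφ, ← mul_sub, abs_mul, abs_of_pos hapos,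
      hLdef, mul_assoc]
    gcongr
    exact hglip x y
  have hφz : ∀ x ∉ interior (simT B), φ x = 0 := by
    intro x hx
    unfold simT at hx
    rw [AffineBasis.interior_convexHull] at hx
    simp only [mem_setOf_eq, not_forall, not_lt] at hx
    obtain ⟨i, hi⟩ := hx
    have : b x = 0 := Finset.prod_eq_zero (Finset.mem_univ i)
      (max_eq_left ((min_le_left _ _).trans hi))
    simp [hφ, this]
  have hφb : ∀ x, |φ x| ≤ a * M := by
    intro x
    rw [hφ, abs_mul, abs_of_pos hapos, abs_mul]
    have : |R x| * |b x| ≤ M * 1 := by gcongr; exacts [hRM x, hb1 x]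
    rw [mul_one] at this
    gcongr
  have hVi : volume.real (interior (simT B)) ≤ V := measureReal_mono interior_subset hTfin.ne
  have hVif : volume (interior (simT B)) < ∞ := (measure_mono interior_subset).trans_lt hTfin
  have haV : a ^ 2 * M ^ 2 * V * K ^ 2 = m ^ 2 := by
    rw [ha, div_pow, mul_pow, mul_pow, Real.sq_sqrt hV.le]
    field_simp
  refine ⟨φ, ⟨⟨_, hφlip⟩, hφz⟩, ?_, ?_⟩
  · have hG : gradSq (interior (simT B)) φ ≤ L ^ 2 * V := by
      have := norm_setIntegral_le_of_norm_le_const (μ := volume) (s := interior (simT B))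
        (f := fun x => ‖gradient φ x‖ ^ 2) (C := L ^ 2) hVif (fun x _ => by
          rw [Real.norm_of_nonneg (by positivity), norm_gradient_eq]
          have := norm_fderiv_le_of_lipschitz ℝ hφlip (x₀ := x)
          rw [Real.coe_toNNReal L hL0] at this
          gcongr)
      exact (le_abs_self _).trans (this.trans (by gcongr))
    have hS : sqIntg (interior (simT B)) φ ≤ (a * M) ^ 2 * V := by
      have := norm_setIntegral_le_of_norm_le_const (μ := volume) (s := interior (simT B))
        (f := fun x => φ x ^ 2) (C := (a * M) ^ 2) hVif (fun x _ => by
          rw [Real.norm_of_nonneg (by positivity), ← sq_abs]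
          gcongr
          exact hφb x)
      exact (le_abs_self _).trans (this.trans (by gcongr))
    have hm1 : 1 / h ^ 2 ≤ 1 / m ^ 2 := by
      gcongr; exact min_le_left _ _
    have hm2 : κ ^ 2 ≤ 1 / m ^ 2 := by
      have h1 : m * κ ≤ 1 := by
        have : m ≤ κ⁻¹ := min_le_right _ _
        calc m * κ ≤ κ⁻¹ * κ := by gcongr
          _ = 1 := inv_mul_cancel₀ hκ.ne'
      rw [le_div_iff₀ (by positivity)]
      have : 0 ≤ m * κ := by positivity
      nlinarith
    unfold energySq
    calc _ ≤ L ^ 2 * V + κ ^ 2 * ((a * M) ^ 2 * V) := by gcongr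
      _ = a ^ 2 * M ^ 2 * V * ((8 * (d + 1) * μ) ^ 2 * (1 / h ^ 2) + κ ^ 2) := by
          rw [hLdef]; field_simp
      _ ≤ a ^ 2 * M ^ 2 * V * ((8 * (d + 1) * μ) ^ 2 * (1 / m ^ 2) + 1 / m ^ 2) := by gcongr
      _ = a ^ 2 * M ^ 2 * V * K ^ 2 * (1 / m ^ 2) := by rw [hKsq]; ring
      _ = 1 := by rw [haV]; field_simp
  · have hI : ∫ x in simT B, r x * φ x = a * ∫ x in simT B, r x ^ 2 * ∏ i, B.coord i x := by
      rw [← integral_const_mul]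
      refine setIntegral_congr_fun hT.measurableSet fun x hx => ?_
      have hx' := (mem_simT B x).1 hx
      have h1 : R x = r x := by
        have := abs_le.1 (hrT x hx)
        simp only [hR]
        rw [min_eq_left this.2, max_eq_right this.1]
      have h2 : b x = ∏ i, B.coord i x := by
        refine Finset.prod_congr rfl fun i _ => ?_
        rw [min_eq_left (coord_le_one B hx' i), max_eq_right (hx' i)]
      simp only [hφ, h1, h2]; ring
    have hsq : Real.sqrt (sqIntg (simT B) (fun x => r x)) ≤ M * Real.sqrt V := by
      have h1 : sqIntg (simT B) (fun x => r x) ≤ M ^ 2 * V := by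
        have := norm_setIntegral_le_of_norm_le_const (μ := volume) (s := simT B)
          (f := fun x => r x ^ 2) (C := M ^ 2) hTfin (fun x hx => by
            rw [Real.norm_of_nonneg (by positivity), ← sq_abs]
            gcongr
            exact hrT x hx)
        exact (le_abs_self _).trans this
      calc _ ≤ Real.sqrt (M ^ 2 * V) := Real.sqrt_le_sqrt h1
        _ = _ := by rw [Real.sqrt_mul (by positivity), Real.sqrt_sq hMpos.le]
    rw [hI]
    set β := (1 / (32 * ((d:ℝ) + 1))) ^ (d + 1) with hβ
    set τ := (1 / 16 : ℝ) ^ d with hτ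
    have hβ0 : 0 < β := by positivity
    have hτ0 : 0 < τ := by positivity
    have hVV : V = Real.sqrt V * Real.sqrt V := (Real.mul_self_sqrt hV.le).symm
    calc _ ≤ β * τ / (4 * K) * m * (M * Real.sqrt V) := by gcongr
      _ = a * (M ^ 2 / 4 * β * (τ * (Real.sqrt V * Real.sqrt V))) := by
          rw [ha]; field_simp
      _ = a * (M ^ 2 / 4 * β * (τ * V)) := by rw [← hVV]
      _ ≤ _ := by gcongr

/-- two-sided robust bound for the element residual. For a
nondegenerate `d`-simplex `T` with shape parameter `≤ μ` and every affine `r`, the local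
dual energy norm of `φ ↦ ∫_T r φ` over `int T` is equivalent to
`min{h_T, κ⁻¹} ‖r‖_{L²(T)}`, with constants `c, C` depending only on `d` and `μ`. -/
theorem element_residual_two_sided (d : ℕ) (hd : 1 ≤ d) (μ : ℝ) :
    ∃ c C : ℝ, 0 < c ∧ 0 < C ∧ ∀ κ : ℝ, 0 < κ →
      ∀ B : AffineBasis (Fin (d + 1)) ℝ (Euc d),
        Metric.diam (simT B) ≤ μ * inradius (simT B) →
        ∀ r : Euc d →ᵃ[ℝ] ℝ,
          ENNReal.ofReal (c * min (Metric.diam (simT B)) κ⁻¹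
              * Real.sqrt (sqIntg (simT B) (fun x => r x)))
            ≤ dualNorm κ (interior (simT B)) (fun φ => ∫ x in simT B, r x * φ x) ∧
          dualNorm κ (interior (simT B)) (fun φ => ∫ x in simT B, r x * φ x)
            ≤ ENNReal.ofReal (C * min (Metric.diam (simT B)) κ⁻¹
                * Real.sqrt (sqIntg (simT B) (fun x => r x))) := by
  refine ⟨(1 / (32 * ((d:ℝ) + 1))) ^ (d + 1) * (1 / 16) ^ d
    / (4 * Real.sqrt ((8 * (d + 1) * μ) ^ 2 + 1)), 2, ?_, two_pos, ?_⟩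
  · have : 0 < Real.sqrt ((8 * (d + 1) * μ) ^ 2 + 1) := Real.sqrt_pos.2 (by positivity)
    positivity
  intro κ hκ B hB r
  have hrc : Continuous r := r.continuous_of_finiteDimensional
  have hcc : ∀ i, Continuous (B.coord i) := fun i => (B.coord i).continuous_of_finiteDimensional
  have hT := isCompact_simT B
  have hne : (simT B).Nonempty := ⟨B 0, subset_convexHull ℝ _ ⟨0, rfl⟩⟩
  constructor
  · rcases (Metric.diam_nonneg (s := simT B)).eq_or_lt with hh | hh
    · rw [← hh, min_eq_left (by positivity)]
      simp
    by_cases hV : volume (simT B) = 0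
    · have : sqIntg (simT B) (fun x => r x) = 0 := by
        unfold sqIntg
        rw [Measure.restrict_eq_zero.2 hV]; simp
      rw [this]; simp
    obtain ⟨i0, hi0⟩ := Finite.exists_max (fun i => |r (B i)|)
    rcases (abs_nonneg (r (B i0))).eq_or_lt with hM | hM
    · have h0 : ∀ x, r x = 0 := by
        intro x
        rw [affine_eq_sum B r x]
        refine Finset.sum_eq_zero fun i _ => ?_
        have h1 : |r (B i)| ≤ 0 := hM ▸ hi0 i
        rw [abs_nonpos_iff.1 h1, mul_zero]
      have : sqIntg (simT B) (fun x => r x) = 0 := by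
        unfold sqIntg; simp [h0]
      rw [this]; simp
    obtain ⟨hμ, c, ρ, hρ, hball, hd2⟩ := exists_ball _ μ hh hB
    obtain ⟨φ, h1, h2, h3⟩ := lower_aux κ μ hκ hμ B r hrc hcc i0 hi0 hM hh
      (ENNReal.toReal_pos hV hT.measure_lt_top.ne) hρ hball hd2
    refine (ENNReal.ofReal_le_ofReal h3).trans ?_
    unfold dualNorm
    exact le_iSup₂ (f := fun (φ : Euc d → ℝ)
      (_ : φ ∈ {φ : Euc d → ℝ | IsTest (interior (simT B)) φ ∧
        energySq κ (interior (simT B)) φ ≤ 1}) =>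
        ENNReal.ofReal (∫ x in simT B, r x * φ x)) φ ⟨h1, h2⟩
  · unfold dualNorm
    refine iSup₂_le fun φ hφ => ENNReal.ofReal_le_ofReal ?_
    exact upper_aux hd κ hκ hT hne (fun x => r x) hrc φ hφ.1 hφ.2
end
end
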